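/- Let (ε, u_1, ..., u_J) be a random vector whose joint distribution is multivariate normal, let V_1, ..., V_J ∈ ℝ be constants, set Y_j := V_j + u_j for each j, and suppose the values Y_1(ω), ..., Y_J(ω) are almost surely pairwise distinct. Let Y^{(2)} denote the second-highest order statistic of (Y_1, ..., Y_J). Then for every fixed index j* ∈ {1, ..., J}, Cov(ε, Y^{(2)} − u_{j*}) = Σ_{j=1}^J Cov(ε, u_j) · P(Y_j = Y^{(2)}) − Cov(ε, u_{j*}). -/

import Mathlib

/-!
The covariance formula is Siegel's formula, obtained from Stein's identity in the single variable
`ε`. If `ε` is degenerate, all covariances vanish. Otherwise write `u j = W j + b j * ε` with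
`b j = Cov(ε, u j) / Var ε`; the residual `W` is uncorrelated with `ε`, hence independent of it by
joint normality. For a fixed value of `W`, the order statistic is a Lipschitz function of `ε`
(`lipschitzWith_sortVal`), and wherever the `Y j` are pairwise distinct it agrees locally with one
of them, so that its derivative is `∑ j, b j * 1{Y j = Y₍ₖ₎}` (`hasDerivAt_sortVal_line`). Stein's
identity (`stein_lipschitz`) and Fubini then give
`Cov(ε, Y₍ₖ₎) = Var ε * ∑ j, b j * P(Y j = Y₍ₖ₎) = ∑ j, Cov(ε, u j) * P(Y j = Y₍ₖ₎)`
(`covariance_sortVal`), and subtracting `Cov(ε, u j')` is bilinearity.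
-/

open MeasureTheory ProbabilityTheory Real

/-- Covariance of two real random variables: `Cov(X, Y) = E[X*Y] - E[X] * E[Y]`. -/
noncomputable def covar {Ω : Type*} [MeasurableSpace Ω] (μ : Measure Ω) (X Y : Ω → ℝ) : ℝ :=
  (∫ ω, X ω * Y ω ∂μ) - (∫ ω, X ω ∂μ) * (∫ ω, Y ω ∂μ)

/-- The `r`-th order statistic (with `r = 0` the largest and `r = n - 1` the smallest) of
the random variables `X 0, ..., X (n-1)`: pointwise, the `r`-th largest value among
`X 0 ω, ..., X (n-1) ω`. -/
noncomputable def orderStat {Ω : Type*} {n : ℕ} (X : Fin n → Ω → ℝ) (r : Fin n) (ω : Ω) : ℝ :=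
  X (Tuple.sort (fun i => X i ω) r.rev) ω

/-- `(X 0, ..., X (n-1))` is a multivariate normal vector with mean vector `m` and
(positive semidefinite) covariance matrix `S`: every linear combination of the
coordinates is one-dimensional Gaussian with the corresponding mean and variance. -/
def IsMultivariateGaussian {Ω : Type*} [MeasurableSpace Ω] (μ : Measure Ω) {n : ℕ}
    (X : Fin n → Ω → ℝ) (m : Fin n → ℝ) (S : Matrix (Fin n) (Fin n) ℝ) : Prop :=
  S.PosSemidef ∧ ∀ a : Fin n → ℝ,
    Measure.map (fun ω => ∑ i, a i * X i ω) μ =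
      gaussianReal (∑ i, a i * m i) (Real.toNNReal (∑ i, ∑ j, a i * S i j * a j))

/-! ### Order statistics of a tuple -/

/-- The `k`-th smallest entry (counted from `0`) of a tuple of reals. -/
noncomputable def sortVal {n : ℕ} (k : Fin n) (y : Fin n → ℝ) : ℝ := y (Tuple.sort y k)

/-- Counting characterisation of order statistics; it makes their monotonicity evident. -/
lemma sortVal_le_iff {n : ℕ} (k : Fin n) (y : Fin n → ℝ) (a : ℝ) :
    sortVal k y ≤ a ↔ (k : ℕ) < (Finset.univ.filter fun i => y i ≤ a).card := by
  have h := Tuple.lt_card_le_iff_apply_le_of_monotone (j := k) (a := a) (Tuple.monotone_sort y)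
  rw [show sortVal k y = (y ∘ Tuple.sort y) k from rfl, ← h]
  have : (Finset.univ.filter fun i => y i ≤ a).card
      = (Finset.univ.filter fun i => (y ∘ Tuple.sort y) i ≤ a).card := by
    symm
    refine Finset.card_bij (fun i _ => Tuple.sort y i) ?_ ?_ ?_
    · intro i hi
      simpa using hi
    · intro i _ j _ hij
      exact (Tuple.sort y).injective hij
    · intro j hj
      exact ⟨(Tuple.sort y).symm j, by simpa using hj, by simp⟩
  rw [this]

lemma sortVal_le_add {n : ℕ} (k : Fin n) {y z : Fin n → ℝ} {c : ℝ}
    (h : ∀ i, y i ≤ z i + c) : sortVal k y ≤ sortVal k z + c := by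
  rw [sortVal_le_iff]
  refine lt_of_lt_of_le ((sortVal_le_iff k z (sortVal k z)).1 le_rfl) (Finset.card_le_card ?_)
  intro i hi
  simp only [Finset.mem_filter, Finset.mem_univ, true_and] at hi ⊢
  linarith [h i]

lemma lipschitzWith_sortVal {n : ℕ} (k : Fin n) : LipschitzWith 1 (sortVal k) := by
  refine LipschitzWith.of_le_add fun y z => sortVal_le_add k fun i => ?_
  have := (le_abs_self _).trans ((Real.dist_eq (y i) (z i)).symm.le.trans (dist_le_pi_dist y z i))
  linarith

/-- Near a tuple with distinct entries the sorting permutation is locally constant. -/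
lemma sortVal_eventuallyEq {n : ℕ} (k : Fin n) {y : Fin n → ℝ} (hy : Function.Injective y) :
    ∀ᶠ z in nhds y, sortVal k z = z (Tuple.sort y k) := by
  have hmono : StrictMono (y ∘ Tuple.sort y) :=
    (Tuple.monotone_sort y).strictMono_of_injective (hy.comp (Tuple.sort y).injective)
  have hev : ∀ᶠ z in nhds y, ∀ i j, i < j → z (Tuple.sort y i) < z (Tuple.sort y j) := by
    simp only [Filter.eventually_all]
    intro i j hij
    exact (continuous_apply _).continuousAt.eventually_lt
      (continuous_apply _).continuousAt (hmono hij)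
  filter_upwards [hev] with z hz
  have : Tuple.sort y = Tuple.sort z := by
    rw [Tuple.eq_sort_iff]
    exact ⟨StrictMono.monotone fun i j hij => hz i j hij,
      fun i j hij h => absurd h (hz i j hij).ne⟩
  rw [this]; rfl

/-- Along a line through a tuple with distinct entries, the derivative of the order statistic is
the slope of the unique coordinate attaining it, written as a sum over coordinates. -/
lemma hasDerivAt_sortVal_line {n : ℕ} (k : Fin n) (c b : Fin n → ℝ) (t : ℝ)
    (hinj : Function.Injective fun j => c j + b j * t) :
    HasDerivAt (fun s => sortVal k fun j => c j + b j * s)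
      (∑ j, b j * if c j + b j * t = sortVal k (fun j => c j + b j * t) then 1 else 0) t := by
  have hcont : Continuous fun s : ℝ => fun j => c j + b j * s := by fun_prop
  set σ := Tuple.sort (fun j => c j + b j * t) with hσ
  have hsum : (∑ j, b j * if c j + b j * t = sortVal k (fun j => c j + b j * t) then (1:ℝ) else 0)
      = b (σ k) := by
    have hiff : ∀ j, (c j + b j * t = sortVal k (fun j => c j + b j * t)) ↔ j = σ k :=
      fun j => hinj.eq_iff (a := j) (b := σ k)
    simp [hiff]
  rw [hsum]
  have hd : HasDerivAt (fun s => c (σ k) + b (σ k) * s) (b (σ k)) t := by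
    simpa using ((hasDerivAt_id t).const_mul (b (σ k))).const_add (c (σ k))
  exact hd.congr_of_eventuallyEq (hcont.continuousAt.eventually (sortVal_eventuallyEq k hinj))

/-! ### Stein's identity -/

lemma integrable_exp_mul_abs_sub_gaussianReal (m : ℝ) (v : NNReal) (t : ℝ) :
    Integrable (fun x => exp (t * |x - m|)) (gaussianReal m v) := by
  have h : ∀ s : ℝ, Integrable (fun x => exp (s * (x - m))) (gaussianReal m v) := by
    intro s
    refine ((integrable_exp_mul_gaussianReal (μ := m) (v := v) s).mul_const (exp (-(s * m)))).congr
      (Filter.Eventually.of_forall fun x => ?_)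
    simp only [← exp_add]
    ring_nf
  exact integrable_exp_mul_abs (h t) (h (-t))

/-- One-dimensional Cameron–Martin formula. -/
lemma integral_comp_add_gaussianReal (m : ℝ) {v : NNReal} (hv : v ≠ 0) (g : ℝ → ℝ) (s : ℝ) :
    ∫ x, g (x + s) ∂gaussianReal m v =
      ∫ x, g x * exp (s * (x - m) / v - s ^ 2 / (2 * v)) ∂gaussianReal m v := by
  rw [integral_gaussianReal_eq_integral_smul hv, integral_gaussianReal_eq_integral_smul hv,
    ← integral_sub_right_eq_self (fun x => gaussianPDFReal m v x • g (x + s)) s]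
  refine integral_congr_ae (Filter.Eventually.of_forall fun x => ?_)
  have hv' : (v : ℝ) ≠ 0 := by exact_mod_cast hv
  have : gaussianPDFReal m v (x - s)
      = gaussianPDFReal m v x * exp (s * (x - m) / v - s ^ 2 / (2 * v)) := by
    simp only [gaussianPDFReal, mul_assoc, ← exp_add]
    congr 2
    field_simp
    ring
  simp only [this, smul_eq_mul, sub_add_cancel]
  ring

/-- Stein's identity for Lipschitz functions of a real Gaussian. Both sides are the derivative at
`s = 0` of `∫ g (x + s)`, computed on the left with the Cameron–Martin formula. -/
lemma stein_lipschitz (m : ℝ) {v : NNReal} (hv : v ≠ 0) {K : NNReal} {g g' : ℝ → ℝ}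
    (hg : LipschitzWith K g) (hg'm : Measurable g')
    (hg' : ∀ᵐ x ∂gaussianReal m v, HasDerivAt g (g' x) x) :
    ∫ x, (x - m) * g x ∂gaussianReal m v = v * ∫ x, g' x ∂gaussianReal m v := by
  have hv' : (0 : ℝ) < v := by
    have : 0 < v := pos_iff_ne_zero.2 hv
    exact_mod_cast this
  have hgc : Continuous g := hg.continuous
  have hgm : Measurable g := hgc.measurable
  set C : ℝ := |g m| + K with hC
  have hC0 : 0 ≤ C := by positivity
  have hgrow : ∀ x, |g x| ≤ C * exp |x - m| := by
    intro x
    have h1 : |g x - g m| ≤ K * |x - m| := by simpa [Real.dist_eq] using hg.dist_le_mul x m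
    have h2 : |g x| ≤ |g m| + |g x - g m| := by
      have := abs_add_le (g m) (g x - g m)
      simpa using this
    have h3 := add_one_le_exp |x - m|
    have h4 : 0 ≤ |x - m| := abs_nonneg _
    have hK : (0 : ℝ) ≤ K := K.2
    nlinarith [abs_nonneg (g m)]
  have hint : Integrable g (gaussianReal m v) := by
    refine Integrable.mono' ((integrable_exp_mul_abs_sub_gaussianReal m v 1).const_mul C)
      hgm.aestronglyMeasurable (Filter.Eventually.of_forall fun x => ?_)
    simpa using hgrow x
  have hL : HasDerivAt (fun s => ∫ x, g (x + s) ∂gaussianReal m v)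
      (∫ x, g' x ∂gaussianReal m v) 0 := by
    refine (hasDerivAt_integral_of_dominated_loc_of_lip (F := fun s x => g (x + s))
      (bound := fun _ => (K : ℝ)) (s := Set.univ) Filter.univ_mem
      (Filter.Eventually.of_forall fun s => by fun_prop) (by simpa using hint)
      hg'm.aestronglyMeasurable ?_ (integrable_const _) ?_).2
    · refine Filter.Eventually.of_forall fun x => ?_
      have : LipschitzWith K fun s => g (x + s) := by
        refine LipschitzWith.of_dist_le_mul fun s t => ?_
        simpa using hg.dist_le_mul (x + s) (x + t)
      simpa using this
    · filter_upwards [hg'] with x hx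
      exact HasDerivAt.comp_const_add x 0 (by simpa using hx)
  have hR : HasDerivAt
      (fun s => ∫ x, g x * exp (s * (x - m) / v - s ^ 2 / (2 * v)) ∂gaussianReal m v)
      (∫ x, g x * (exp (0 * (x - m) / v - 0 ^ 2 / (2 * v)) * ((x - m) / v - 0 / v))
        ∂gaussianReal m v) 0 := by
    refine (hasDerivAt_integral_of_dominated_loc_of_deriv_le
      (F := fun s x => g x * exp (s * (x - m) / v - s ^ 2 / (2 * v)))
      (F' := fun s x => g x * (exp (s * (x - m) / v - s ^ 2 / (2 * v)) * ((x - m) / v - s / v)))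
      (bound := fun x => C / v * exp ((2 + 1 / v) * |x - m|))
      (Metric.ball_mem_nhds (0 : ℝ) one_pos)
      (Filter.Eventually.of_forall fun s => by fun_prop) (by simpa using hint)
      (by fun_prop) ?_ ((integrable_exp_mul_abs_sub_gaussianReal m v _).const_mul _) ?_).2
    · refine Filter.Eventually.of_forall fun x s hs => ?_
      have hs1 : |s| ≤ 1 := by
        have : |s| < 1 := by simpa [Real.dist_eq] using hs
        exact this.le
      have e1 : exp (s * (x - m) / v - s ^ 2 / (2 * v)) ≤ exp (1 / v * |x - m|) := by
        apply exp_le_exp.2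
        have a1 : s * (x - m) ≤ |x - m| := by
          calc s * (x - m) ≤ |s * (x - m)| := le_abs_self _
            _ = |s| * |x - m| := abs_mul _ _
            _ ≤ 1 * |x - m| := by gcongr
            _ = _ := one_mul _
        have a2 : s * (x - m) / v ≤ |x - m| / v := by gcongr
        have a3 : 0 ≤ s ^ 2 / (2 * (v : ℝ)) := by positivity
        have a4 : 1 / (v : ℝ) * |x - m| = |x - m| / v := by ring
        linarith
      have e2 : |(x - m) / v - s / v| ≤ exp |x - m| / v := by
        rw [← sub_div, abs_div, abs_of_pos hv']
        gcongr
        have := abs_sub (x - m) s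
        linarith [add_one_le_exp |x - m|]
      rw [Real.norm_eq_abs, abs_mul, abs_mul, abs_of_pos (exp_pos _)]
      calc _ ≤ (C * exp |x - m|) * (exp (1 / v * |x - m|) * (exp |x - m| / v)) := by
            gcongr
            exact hgrow x
        _ = C / v * (exp |x - m| * exp (1 / v * |x - m|) * exp |x - m|) := by ring
        _ = _ := by
            rw [← exp_add, ← exp_add]
            ring_nf
    · refine Filter.Eventually.of_forall fun x s _ => ?_
      refine HasDerivAt.const_mul (g x) (HasDerivAt.exp ?_)
      have h1 : HasDerivAt (fun s : ℝ => s * (x - m) / v) ((x - m) / v) s := by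
        simpa using ((hasDerivAt_id s).mul_const (x - m)).div_const (v : ℝ)
      have h2 : HasDerivAt (fun s : ℝ => s ^ 2 / (2 * (v : ℝ))) (s / v) s := by
        have h := (hasDerivAt_pow 2 s).div_const (2 * (v : ℝ))
        have he : ((2 : ℕ) : ℝ) * s ^ (2 - 1) / (2 * (v : ℝ)) = s / v := by
          norm_num
          field_simp
        rwa [he] at h
      exact h1.sub h2
  simp_rw [integral_comp_add_gaussianReal m hv g] at hL
  rw [hL.unique hR, ← integral_const_mul]
  refine integral_congr_ae (Filter.Eventually.of_forall fun x => ?_)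
  simp
  field_simp

/-! ### Covariance with an order statistic -/

/-- Multivariate normality in the sense of one-dimensional projections is Mathlib's notion of a
Gaussian vector. -/
lemma IsMultivariateGaussian.hasGaussianLaw {Ω : Type*} [MeasurableSpace Ω] {μ : Measure Ω}
    {n : ℕ} {X : Fin n → Ω → ℝ} {m : Fin n → ℝ} {S : Matrix (Fin n) (Fin n) ℝ}
    (hX : ∀ i, Measurable (X i)) (h : IsMultivariateGaussian μ X m S) :
    HasGaussianLaw (fun ω i => X i ω) μ := by
  refine ⟨isGaussian_of_map_eq_gaussianReal fun L => ?_⟩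
  refine ⟨_, _, Eq.trans ?_ (h.2 fun i => L (Pi.single i 1))⟩
  rw [Measure.map_map L.continuous.measurable (measurable_pi_lambda _ hX)]
  refine congrArg (fun f => Measure.map f μ) (funext fun ω => ?_)
  have hsum := LinearMap.pi_apply_eq_sum_univ L.toLinearMap (fun i => X i ω)
  simp only [Function.comp_apply]
  refine Eq.trans hsum (Finset.sum_congr rfl fun i _ => ?_)
  rw [smul_eq_mul, mul_comm]
  refine congrArg (fun y => L y * X i ω) (funext fun j => ?_)
  simp [Pi.single_apply, eq_comm]

lemma covar_eq_covariance {Ω : Type*} [MeasurableSpace Ω] {μ : Measure Ω}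
    [IsProbabilityMeasure μ] {X Y : Ω → ℝ} (hX : MemLp X 2 μ) (hY : MemLp Y 2 μ) :
    covar μ X Y = cov[X, Y; μ] := by
  rw [covariance_eq_sub hX hY]; rfl

/-- Siegel's formula `Cov(ε, Y₍ₖ₎) = ∑ j, Cov(ε, u j) P(Y j = Y₍ₖ₎)` for the `k`-th smallest
value `Y₍ₖ₎` of the `Y j = V j + u j`. -/
lemma covariance_sortVal {Ω : Type*} [MeasurableSpace Ω] {μ : Measure Ω}
    [IsProbabilityMeasure μ] {n : ℕ} {ε : Ω → ℝ} {u : Fin n → Ω → ℝ}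
    (hmeasε : Measurable ε) (hmeasu : ∀ j, Measurable (u j))
    (hG : HasGaussianLaw (fun ω => (ε ω, fun j => u j ω)) μ) (V : Fin n → ℝ)
    (hdist : ∀ᵐ ω ∂μ, ∀ i j, i ≠ j → V i + u i ω ≠ V j + u j ω) (k : Fin n)
    (hY : MemLp (fun ω => sortVal k fun j => V j + u j ω) 2 μ) :
    cov[ε, fun ω => sortVal k fun j => V j + u j ω; μ] =
      ∑ j, cov[ε, u j; μ] *
        (μ {ω | V j + u j ω = sortVal k fun j => V j + u j ω}).toReal := by
  have hε : HasGaussianLaw ε μ := hG.fst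
  have hu : ∀ j, HasGaussianLaw (u j) μ := fun j => hG.snd.eval j
  have hε2 : MemLp ε 2 μ := hε.memLp_two
  have hu2 : ∀ j, MemLp (u j) 2 μ := fun j => (hu j).memLp_two
  by_cases hvar : Var[ε; μ] = 0
  · -- A degenerate `ε` is almost surely constant, so every covariance with it vanishes.
    have h0 : ∀ Z : Ω → ℝ, cov[ε, Z; μ] = 0 := by
      intro Z
      refine integral_eq_zero_of_ae ?_
      filter_upwards [ae_eq_integral_of_variance_eq_zero hε2 hvar] with ω hω
      simp [← hω]
    simp [h0]
  set m : ℝ := μ[ε] with hm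
  set v : NNReal := Var[ε; μ].toNNReal with hv
  have hvR : (v : ℝ) = Var[ε; μ] := Real.coe_toNNReal _ (variance_nonneg _ _)
  have hvR0 : (v : ℝ) ≠ 0 := by rw [hvR]; exact hvar
  have hv0 : v ≠ 0 := by exact_mod_cast hvR0
  set b : Fin n → ℝ := fun j => cov[ε, u j; μ] / v with hb
  -- `W` is the residual of the regression of `u` on `ε`.
  set W : Ω → Fin n → ℝ := fun ω j => u j ω - b j * ε ω with hW
  have hWm : Measurable W := measurable_pi_lambda _ fun j => by fun_prop
  have hpairm : Measurable fun ω => (W ω, ε ω) := hWm.prodMk hmeasε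
  have hind : IndepFun W ε μ := by
    have hlaw : HasGaussianLaw
        (fun ω => ((fun j => u j ω - b j * ε ω), fun _ : Unit => ε ω)) μ := by
      let L : (ℝ × (Fin n → ℝ)) →L[ℝ] (Fin n → ℝ) × (Unit → ℝ) :=
        (ContinuousLinearMap.pi fun j =>
          (ContinuousLinearMap.proj j).comp (ContinuousLinearMap.snd ℝ ℝ (Fin n → ℝ))
            - b j • ContinuousLinearMap.fst ℝ ℝ (Fin n → ℝ)).prod
        (ContinuousLinearMap.pi fun _ => ContinuousLinearMap.fst ℝ ℝ (Fin n → ℝ))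
      exact hG.map_fun L
    have h := HasGaussianLaw.indepFun_of_covariance_eval
      (X := fun j ω => u j ω - b j * ε ω) (Y := fun (_ : Unit) ω => ε ω) hlaw ?_
    · exact h.comp (φ := id) (ψ := fun y : Unit → ℝ => y ()) measurable_id
        (measurable_pi_apply ())
    · intro j _
      rw [covariance_fun_sub_left (hu2 j) (hε2.const_mul _) hε2, covariance_const_mul_left,
        covariance_self hmeasε.aemeasurable, ← hvR, covariance_comm]
      simp only [hb]
      field_simp
      simp
  have hlawprod : μ.map (fun ω => (W ω, ε ω)) = (μ.map W).prod (gaussianReal m v) := by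
    rw [(indepFun_iff_map_prod_eq_prod_map_map hWm.aemeasurable hmeasε.aemeasurable).1 hind,
      hε.map_eq_gaussianReal]
  have : IsProbabilityMeasure (μ.map W) := Measure.isProbabilityMeasure_map hWm.aemeasurable
  -- `G w t` is the order statistic as a function of the residual `w` and of the value `t` of `ε`.
  set G : (Fin n → ℝ) → ℝ → ℝ := fun w t => sortVal k fun j => (V j + w j) + b j * t with hGdef
  have hsc : Continuous (sortVal k) := (lipschitzWith_sortVal k).continuous
  have hGc : Continuous fun p : (Fin n → ℝ) × ℝ => G p.1 p.2 :=
    hsc.comp (by fun_prop)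
  have hYj : ∀ ω j, (V j + W ω j) + b j * ε ω = V j + u j ω := by
    intro ω j; simp only [hW]; ring
  have hYG : ∀ ω, G (W ω) (ε ω) = sortVal k fun j => V j + u j ω := by
    intro ω; simp only [hGdef, hYj]
  set D : (Fin n → ℝ) → ℝ → ℝ := fun w t =>
    ∑ j, b j * if (V j + w j) + b j * t = G w t then 1 else 0 with hD
  have hset : ∀ j, MeasurableSet
      {p : (Fin n → ℝ) × ℝ | (V j + p.1 j) + b j * p.2 = G p.1 p.2} := fun j =>
    (isClosed_eq (by fun_prop) hGc).measurableSet
  have hDm : Measurable fun p : (Fin n → ℝ) × ℝ => D p.1 p.2 := by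
    refine Finset.measurable_sum _ fun j _ => Measurable.const_mul ?_ _
    exact Measurable.ite (hset j) measurable_const measurable_const
  have hDbound : ∀ w t, ‖D w t‖ ≤ ∑ j, |b j| := by
    intro w t
    refine (norm_sum_le _ _).trans (Finset.sum_le_sum fun j _ => ?_)
    split_ifs <;> simp
  have hDint : Integrable (fun p : (Fin n → ℝ) × ℝ => D p.1 p.2)
      ((μ.map W).prod (gaussianReal m v)) :=
    Integrable.of_bound hDm.aestronglyMeasurable _
      (Filter.Eventually.of_forall fun p => hDbound p.1 p.2)
  have hεc : MemLp (fun ω => ε ω - m) 2 μ := hε2.sub (memLp_const m)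
  have hYint : Integrable (fun ω => (ε ω - m) * sortVal k fun j => V j + u j ω) μ :=
    hεc.integrable_mul hY
  have hcontF : Continuous fun p : (Fin n → ℝ) × ℝ => (p.2 - m) * G p.1 p.2 := by fun_prop
  have hGint : Integrable (fun p : (Fin n → ℝ) × ℝ => (p.2 - m) * G p.1 p.2)
      ((μ.map W).prod (gaussianReal m v)) := by
    rw [← hlawprod, integrable_map_measure hcontF.aestronglyMeasurable hpairm.aemeasurable]
    refine hYint.congr (Filter.Eventually.of_forall fun ω => ?_)
    simp [hYG]
  have hinj : ∀ᵐ p ∂(μ.map W).prod (gaussianReal m v),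
      ∀ i j, i ≠ j → (V i + p.1 i) + b i * p.2 ≠ (V j + p.1 j) + b j * p.2 := by
    rw [← hlawprod]
    simp only [ae_all_iff]
    intro i j hij
    rw [ae_map_iff hpairm.aemeasurable
      (isOpen_ne_fun (by fun_prop) (by fun_prop)).measurableSet]
    filter_upwards [hdist] with ω hω
    rw [hYj, hYj]
    exact hω i j hij
  have hstein : ∀ᵐ w ∂μ.map W, ∫ t, (t - m) * G w t ∂gaussianReal m v
      = v * ∫ t, D w t ∂gaussianReal m v := by
    filter_upwards [Measure.ae_ae_of_ae_prod hinj] with w hw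
    have hlip : LipschitzWith ‖b‖₊ (G w) := by
      have h1 : LipschitzWith ‖b‖₊ fun t : ℝ => fun j => (V j + w j) + b j * t := by
        refine LipschitzWith.of_dist_le_mul fun s t => ?_
        refine (dist_pi_le_iff (by positivity)).2 fun j => ?_
        rw [dist_add_left, Real.dist_eq, ← mul_sub, abs_mul, Real.dist_eq]
        gcongr
        exact norm_le_pi_norm b j
      simpa using! (lipschitzWith_sortVal k).comp h1
    refine stein_lipschitz m hv0 hlip (hDm.comp measurable_prodMk_left) ?_
    filter_upwards [hw] with t ht
    refine hasDerivAt_sortVal_line k (fun j => V j + w j) b t fun i j hij => ?_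
    by_contra hne
    exact ht i j hne hij
  have hlhs : cov[ε, fun ω => sortVal k fun j => V j + u j ω; μ]
      = ∫ ω, (ε ω - m) * sortVal k (fun j => V j + u j ω) ∂μ := by
    have hεi : Integrable ε μ := hε.integrable
    have h0 : ∫ ω, (ε ω - m) ∂μ = 0 := by
      rw [integral_sub hεi (integrable_const m)]
      simp [hm]
    rw [← covariance_sub_const_left hεi m, covariance_eq_sub hεc hY, h0, zero_mul, sub_zero]
    rfl
  have hrhs : ∫ ω, D (W ω) (ε ω) ∂μ
      = ∑ j, b j * (μ {ω | V j + u j ω = sortVal k fun j => V j + u j ω}).toReal := by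
    have hS : ∀ j, MeasurableSet {ω | V j + u j ω = sortVal k fun j => V j + u j ω} := by
      intro j
      have := hpairm (hset j)
      simpa only [Set.preimage_ofPred_eq, hYj, hYG] using this
    have hpt : ∀ ω, D (W ω) (ε ω) = ∑ j, b j *
        {ω | V j + u j ω = sortVal k fun j => V j + u j ω}.indicator (fun _ => (1 : ℝ)) ω := by
      intro ω
      simp only [hD, hYj, hYG, Set.indicator_apply, Set.mem_ofPred_eq]
    simp only [hpt]
    rw [integral_finsetSum _ fun j _ =>
      ((integrable_const (1 : ℝ)).indicator (hS j)).const_mul _]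
    refine Finset.sum_congr rfl fun j _ => ?_
    rw [integral_const_mul, integral_indicator_const _ (hS j)]
    simp [Measure.real]
  calc cov[ε, fun ω => sortVal k fun j => V j + u j ω; μ]
      = ∫ p, (p.2 - m) * G p.1 p.2 ∂(μ.map W).prod (gaussianReal m v) := by
        rw [hlhs, ← hlawprod, integral_map hpairm.aemeasurable hcontF.aestronglyMeasurable]
        simp only [hYG]
    _ = ∫ w, v * ∫ t, D w t ∂gaussianReal m v ∂μ.map W := by
        rw [integral_prod _ hGint]
        exact integral_congr_ae hstein
    _ = v * ∫ ω, D (W ω) (ε ω) ∂μ := by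
        rw [integral_const_mul, ← integral_prod _ hDint, ← hlawprod,
          integral_map hpairm.aemeasurable hDm.aestronglyMeasurable]
    _ = _ := by
        rw [hrhs, Finset.mul_sum]
        refine Finset.sum_congr rfl fun j _ => ?_
        simp only [hb]
        field_simp

/-- If `(ε, u 0, ..., u (J-1))` is jointly multivariate normal, `V j` are constants, and the
latent utilities `Y j = V j + u j` are a.s. pairwise distinct, then for any fixed `j*` the
covariance of `ε` with the normalized error `Y^{(2)} - u j*` (where `Y^{(2)}` is the
second-highest order statistic of the `Y j`) decomposes as
`Cov(ε, Y^{(2)} - u j*) = ∑ j, Cov(ε, u j) * P(Y j = Y^{(2)}) - Cov(ε, u j*)`. -/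
theorem covar_secondOrderStat_sub {Ω : Type*} [MeasurableSpace Ω] (μ : Measure Ω)
    [IsProbabilityMeasure μ] {J : ℕ} (ε : Ω → ℝ) (u : Fin (J + 2) → Ω → ℝ)
    (hmeasε : Measurable ε) (hmeasu : ∀ j, Measurable (u j))
    (m : Fin (J + 3) → ℝ) (S : Matrix (Fin (J + 3)) (Fin (J + 3)) ℝ)
    (hgauss : IsMultivariateGaussian μ (Fin.cons ε u) m S)
    (V : Fin (J + 2) → ℝ)
    (hdist : ∀ᵐ ω ∂μ, ∀ i j, i ≠ j → V i + u i ω ≠ V j + u j ω)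
    (j' : Fin (J + 2)) :
    covar μ ε
        (fun ω => orderStat (fun j ω => V j + u j ω) 1 ω - u j' ω) =
      (∑ j, covar μ ε (u j) *
          (μ {ω | V j + u j ω =
              orderStat (fun j ω => V j + u j ω) 1 ω}).toReal) -
        covar μ ε (u j') := by
  have hcons : ∀ i, Measurable ((Fin.cons ε u : Fin (J + 3) → Ω → ℝ) i) := by
    intro i
    refine Fin.cases ?_ (fun j => ?_) i
    · simpa using hmeasε
    · simpa using hmeasu j
  have hG : HasGaussianLaw (fun ω => (ε ω, fun j => u j ω)) μ := by
    let L : (Fin (J + 3) → ℝ) →L[ℝ] ℝ × (Fin (J + 2) → ℝ) :=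
      (ContinuousLinearMap.proj 0).prod
        (ContinuousLinearMap.pi fun j : Fin (J + 2) => ContinuousLinearMap.proj j.succ)
    exact (hgauss.hasGaussianLaw hcons).map_fun L
  have hε2 : MemLp ε 2 μ := hG.fst.memLp_two
  have hu2 : ∀ j, MemLp (u j) 2 μ := fun j => (hG.snd.eval j).memLp_two
  set k : Fin (J + 2) := (1 : Fin (J + 2)).rev with hk
  have hos : ∀ ω, orderStat (fun j ω => V j + u j ω) 1 ω = sortVal k fun j => V j + u j ω :=
    fun ω => rfl
  have hY2 : MemLp (fun ω => sortVal k fun j => V j + u j ω) 2 μ := by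
    have hsum : MemLp (fun ω => ∑ j, ‖V j + u j ω‖) 2 μ :=
      memLp_finsetSum _ fun j _ => ((memLp_const (V j)).add (hu2 j)).norm
    refine hsum.mono' ?_ (Filter.Eventually.of_forall fun ω => ?_)
    · exact ((lipschitzWith_sortVal k).continuous.measurable.comp
        (measurable_pi_lambda _ fun j => (hmeasu j).const_add (V j))).aestronglyMeasurable
    · exact Finset.single_le_sum (f := fun j => ‖V j + u j ω‖) (fun j _ => norm_nonneg _)
        (Finset.mem_univ (Tuple.sort (fun j => V j + u j ω) k))
  simp only [hos]
  have hdiff : MemLp (fun ω => (sortVal k fun j => V j + u j ω) - u j' ω) 2 μ :=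
    hY2.sub (hu2 j')
  rw [covar_eq_covariance hε2 hdiff, covariance_fun_sub_right hε2 hY2 (hu2 j'),
    covariance_sortVal hmeasε hmeasu hG V hdist k hY2, covar_eq_covariance hε2 (hu2 j')]
  simp only [covar_eq_covariance hε2 (hu2 _)]
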